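/- Let A = Σ_{e=1}^N L_e^T·A_e·L_e and B = Σ_{e=1}^N L_e^T·B_e·L_e be assembled finite element matrices, where each A_e ∈ ℝ^{m×m} is symmetric positive semidefinite and each B_e ∈ ℝ^{m×m} is symmetric positive definite (so that B is symmetric positive definite). Then min_e λ_1(A_e, B_e) ≤ λ_1(A, B) and λ_n(A, B) ≤ max_e λ_m(A_e, B_e). -/

import Mathlib

open Matrix

/-- The eigenvalues of a symmetric real matrix listed in ascending order with multiplicity. -/
noncomputable def sortedEigs {n : ℕ} (M : Matrix (Fin n) (Fin n) ℝ) : Fin n → ℝ :=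
  if h : M.IsHermitian then h.eigenvalues ∘ Tuple.sort h.eigenvalues else 0

-- The generalized eigenvalues `λ_1(A,B) ≤ … ≤ λ_n(A,B)`: the eigenvalues of
-- `B^{-1/2} A B^{-1/2}` in ascending order with multiplicity (`B` positive definite).
open Classical in
open scoped MatrixOrder in
noncomputable def genEigs {n : ℕ} (A B : Matrix (Fin n) (Fin n) ℝ) : Fin n → ℝ :=
  if hB : B.PosDef then sortedEigs ((CFC.sqrt B)⁻¹ * A * (CFC.sqrt B)⁻¹) else 0

/-- The Boolean connectivity matrix `L_e` of an element whose local-to-global map is `σ`: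
its rows are the standard basis vectors of `ℝ^n` selected by `σ`. -/
def elemL {ι : Type*} {n : ℕ} (σ : ι → Fin n) : Matrix ι (Fin n) ℝ :=
  Matrix.of fun i j => if σ i = j then 1 else 0

open scoped MatrixOrder in
lemma genEigs_aux {k : ℕ} {A B : Matrix (Fin (k+1)) (Fin (k+1)) ℝ} (hA : A.IsHermitian)
    (hB : B.PosDef) :
    (∀ c : ℝ, (A - c • B).PosSemidef ↔ c ≤ genEigs A B 0) ∧
    (∀ c : ℝ, (c • B - A).PosSemidef ↔ genEigs A B (Fin.last k) ≤ c) := by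
  have hB0 : 0 ≤ B := hB.posSemidef.nonneg
  obtain ⟨S, hS⟩ : ∃ S, S = CFC.sqrt B := ⟨_, rfl⟩
  have hSS : S * S = B := by rw [hS]; exact CFC.sqrt_mul_sqrt_self B hB0
  have hSh : S.IsHermitian := by
    rw [hS]; exact (CFC.sqrt_nonneg B).posSemidef.isHermitian
  have hSu : IsUnit S := by rw [hS]; exact (CFC.isUnit_sqrt_iff B hB0).2 hB.isUnit
  have hSd : IsUnit S.det := (Matrix.isUnit_iff_isUnit_det S).1 hSu
  have hSiu : IsUnit S⁻¹ := by
    rw [Matrix.isUnit_iff_isUnit_det]; exact Matrix.isUnit_nonsing_inv_det S hSd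
  have hSih : (S⁻¹).IsHermitian := hSh.inv
  have hstar : star S⁻¹ = S⁻¹ := hSih
  have hM : (S⁻¹ * A * S⁻¹).IsHermitian := by
    have := Matrix.isHermitian_conjTranspose_mul_mul S⁻¹ hA
    rwa [hSih.eq] at this
  have hone : S⁻¹ * B * S⁻¹ = 1 := by
    rw [← hSS, ← mul_assoc, Matrix.nonsing_inv_mul _ hSd, one_mul,
      Matrix.mul_nonsing_inv _ hSd]
  have hg : genEigs A B = hM.eigenvalues ∘ Tuple.sort hM.eigenvalues := by
    unfold genEigs sortedEigs
    rw [dif_pos hB]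
    subst hS
    rw [dif_pos hM]
  have hmono : Monotone (genEigs A B) := by
    rw [hg]; exact Tuple.monotone_sort _
  have hspec : spectrum ℝ (S⁻¹ * A * S⁻¹) = Set.range (genEigs A B) := by
    rw [hM.spectrum_real_eq_range_eigenvalues, hg, Set.range_comp,
      (Tuple.sort hM.eigenvalues).surjective.range_eq, Set.image_univ]
  constructor
  · intro c
    rw [← Matrix.IsUnit.posSemidef_star_left_conjugate_iff hSiu, hstar, mul_sub, sub_mul,
      mul_smul_comm, smul_mul_assoc, hone, ← Algebra.algebraMap_eq_smul_one,
      ← Matrix.le_iff, algebraMap_le_iff_le_spectrum (R := ℝ) hM, hspec, Set.forall_mem_range]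
    exact ⟨fun h => h 0, fun h i => h.trans (hmono (Fin.zero_le i))⟩
  · intro c
    rw [← Matrix.IsUnit.posSemidef_star_left_conjugate_iff hSiu, hstar, mul_sub, sub_mul,
      mul_smul_comm, smul_mul_assoc, hone, ← Algebra.algebraMap_eq_smul_one,
      ← Matrix.le_iff, le_algebraMap_iff_spectrum_le (R := ℝ) hM, hspec, Set.forall_mem_range]
    exact ⟨fun h => h _, fun h i => (hmono (Fin.le_last i)).trans h⟩

lemma elemL_mulVec {ι : Type*} {n : ℕ} (σ : ι → Fin n) (x : Fin n → ℝ) (j : ι) :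
    (elemL σ *ᵥ x) j = x (σ j) := by
  simp [elemL, Matrix.mulVec, dotProduct]

lemma assembled_posDef {N m n : ℕ} (σ : Fin N → Fin m → Fin n)
    (hcover : ∀ i : Fin n, ∃ e j, σ e j = i)
    (Be : Fin N → Matrix (Fin m) (Fin m) ℝ) (hBe : ∀ e, (Be e).PosDef) :
    (∑ e, (elemL (σ e))ᵀ * Be e * elemL (σ e)).PosDef := by
  have hps : ∀ e, ((elemL (σ e))ᵀ * Be e * elemL (σ e)).PosSemidef := fun e => by
    have := (hBe e).posSemidef.conjTranspose_mul_mul_same (elemL (σ e))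
    rwa [Matrix.conjTranspose_eq_transpose_of_trivial] at this
  refine Matrix.PosDef.of_dotProduct_mulVec_pos
    (Matrix.posSemidef_sum _ fun e _ => hps e).isHermitian fun x hx => ?_
  rw [Matrix.sum_mulVec, dotProduct_sum]
  obtain ⟨i, hi⟩ := Function.ne_iff.1 hx
  obtain ⟨e, j, rfl⟩ := hcover i
  refine Finset.sum_pos' (fun e _ => (hps e).dotProduct_mulVec_nonneg x)
    ⟨e, Finset.mem_univ _, ?_⟩
  have hne : elemL (σ e) *ᵥ x ≠ 0 := fun h => hi (by
    have := congrFun h j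
    rwa [elemL_mulVec] at this)
  have := (hBe e).dotProduct_mulVec_pos hne
  rw [← Matrix.conjTranspose_eq_transpose_of_trivial]
  simpa only [star_mulVec, dotProduct_mulVec, vecMul_vecMul] using this

/-- **Element eigenvalue bounds for generalized eigenproblems** (Irons–Treharne / Wathen).
Let `A = Σ_e L_eᵀ·A_e·L_e` and `B = Σ_e L_eᵀ·B_e·L_e` be assembled matrices, with element
matrices `A_e ⪰ 0` symmetric and `B_e ≻ 0` symmetric positive definite, the `L_e` having
distinct standard basis vectors as rows and every global index occurring in at least one and
at most `p_max` elements. Then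
`min_e λ_1(A_e,B_e) ≤ λ_1(A,B)` and `λ_n(A,B) ≤ max_e λ_m(A_e,B_e)`. -/
theorem assembled_generalized_eigenvalue_bounds {N m n pmax : ℕ} (hpmax : 0 < pmax)
    (σ : Fin (N+1) → Fin (m+1) → Fin (n+1))
    (hinj : ∀ e, Function.Injective (σ e))
    (hcover : ∀ i : Fin (n+1), ∃ e j, σ e j = i)
    (hp : ∀ i : Fin (n+1), (Finset.univ.filter fun e => ∃ j, σ e j = i).card ≤ pmax)
    (Ae Be : Fin (N+1) → Matrix (Fin (m+1)) (Fin (m+1)) ℝ)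
    (hAe : ∀ e, (Ae e).PosSemidef) (hBe : ∀ e, (Be e).PosDef)
    (A B : Matrix (Fin (n+1)) (Fin (n+1)) ℝ)
    (hA : A = ∑ e, (elemL (σ e))ᵀ * Ae e * elemL (σ e))
    (hB : B = ∑ e, (elemL (σ e))ᵀ * Be e * elemL (σ e)) :
    (Finset.univ.inf' Finset.univ_nonempty fun e => genEigs (Ae e) (Be e) 0) ≤
        genEigs A B 0 ∧
      genEigs A B (Fin.last n) ≤
        Finset.univ.sup' Finset.univ_nonempty fun e => genEigs (Ae e) (Be e) (Fin.last m) := by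
  have hBp : B.PosDef := hB ▸ assembled_posDef σ hcover Be hBe
  have hconj : ∀ e (X : Matrix (Fin (m+1)) (Fin (m+1)) ℝ), X.PosSemidef →
      ((elemL (σ e))ᵀ * X * elemL (σ e)).PosSemidef := fun e X hX => by
    have := hX.conjTranspose_mul_mul_same (elemL (σ e))
    rwa [Matrix.conjTranspose_eq_transpose_of_trivial] at this
  have hAh : A.IsHermitian := by
    rw [hA]
    exact (Matrix.posSemidef_sum _ fun e _ => hconj e _ (hAe e)).isHermitian
  obtain ⟨h1, h2⟩ := genEigs_aux hAh hBp
  constructor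
  · rw [← h1, hA, hB, Finset.smul_sum, ← Finset.sum_sub_distrib]
    refine Matrix.posSemidef_sum _ fun e _ => ?_
    rw [← Matrix.smul_mul, ← Matrix.mul_smul, ← Matrix.sub_mul, ← Matrix.mul_sub]
    refine hconj e _ (((genEigs_aux (hAe e).isHermitian (hBe e)).1 _).2 ?_)
    exact Finset.inf'_le (fun e => genEigs (Ae e) (Be e) 0) (Finset.mem_univ e)
  · rw [← h2, hA, hB, Finset.smul_sum, ← Finset.sum_sub_distrib]
    refine Matrix.posSemidef_sum _ fun e _ => ?_
    rw [← Matrix.smul_mul, ← Matrix.mul_smul, ← Matrix.sub_mul, ← Matrix.mul_sub]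
    refine hconj e _ (((genEigs_aux (hAe e).isHermitian (hBe e)).2 _).2 ?_)
    exact Finset.le_sup' (fun e => genEigs (Ae e) (Be e) (Fin.last m)) (Finset.mem_univ e)
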